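/- arXiv:2202.07788 — 2 statements merged into one kernel-verified Lean document; each statement's English description precedes it below -/
import Mathlib

section
/- (Gow) For q odd, if π is an irreducible complex representation of SL(2, F_q) admitting a nondegenerate invariant symmetric bilinear form, then the central character satisfies ω_π(-I) = 1, i.e., Θ_π(-I) = Θ_π(I). -/
open Matrix

instance : Fact (Even (Fintype.card (Fin 2))) := ⟨by decide⟩

/-!
Suppose `ρ (-1) = -1`. An invariant symmetric form then kills `(v, ρ g v)` whenever `g ^ 2 = -1`,
for instance for the Weyl element. For an eigenvector `v` of the Borel subgroup, the Bruhat
decomposition gives `B v (ρ g v) = 0` for all `g` outside the Borel subgroup, so `B v v ≠ 0` by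
irreducibility; projecting `ρ weyl v` to the vectors fixed by the unipotent subgroup yields an
eigenvector for the same character, orthogonal to `v` but not to itself, so some combination of the
two is isotropic, a contradiction. Hence the unipotent subgroup fixes no nonzero vector, and some
nontrivial character `ψ` of it occurs in `ρ`, with multiplicity one by the Gelfand trick for the
anti-involution exchanging the diagonal entries.

If `-1 = i ^ 2` in `F`, the torus element of `i` exchanges the `ψ`- and `ψ⁻¹`-lines, which are
paired by `B`, while its square is `-1`: a contradiction. So `q = |F|` is `3` mod `4`, and the trace
takes a single value on nontrivial unipotent elements because it is even and `-1` is not a square.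
All nontrivial characters therefore occur with multiplicity one and the dimension is `q - 1`. But
the Weyl element and a second square root of `-1` anticommuting with it force the dimension to be
divisible by `4`.
-/

namespace Gow

open Module

section LinearAlgebra

variable {k V : Type*} [Field k] [AddCommGroup V] [Module k V]

theorem exists_common_eigenvector [IsAlgClosed k] [FiniteDimensional k V] [Nontrivial V]
    {ι : Type*} (T : ι → End k V) (hT : ∀ i j, Commute (T i) (T j)) :
    ∃ v ≠ 0, ∀ i, ∃ c : k, T i v = c • v := by
  obtain ⟨W, ⟨hW0, hWT⟩, hmin⟩ := (wellFounded_lt (α := Submodule k V)).has_min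
    {W | W ≠ ⊥ ∧ ∀ i, ∀ v ∈ W, T i v ∈ W} ⟨⊤, top_ne_bot, by simp⟩
  have := Submodule.nontrivial_iff_ne_bot.2 hW0
  have le_eigenspace (i : ι) : ∃ c : k, W ≤ (T i).eigenspace c := by
    obtain ⟨c, hc⟩ := End.exists_eigenvalue ((T i).restrict (hWT i))
    obtain ⟨x, hx⟩ := hc.exists_hasEigenvector
    have hxc : T i x = c • (x : V) := congrArg Subtype.val hx.apply_eq_smul
    refine ⟨c, inf_eq_left.1 (eq_of_le_of_not_lt inf_le_left (hmin _ ⟨?_, ?_⟩))⟩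
    · exact (Submodule.ne_bot_iff _).2
        ⟨x, ⟨x.2, End.mem_eigenspace_iff.2 hxc⟩, Subtype.coe_ne_coe.2 hx.2⟩
    · rintro j v ⟨hvW, hvc⟩
      exact ⟨hWT j v hvW, End.mapsTo_genEigenspace_of_comm (hT i j) c 1 hvc⟩
  obtain ⟨v, hvW, hv0⟩ := W.ne_bot_iff.1 hW0
  refine ⟨v, hv0, fun i => ?_⟩
  obtain ⟨c, hc⟩ := le_eigenspace i
  exact ⟨c, End.mem_eigenspace_iff.1 (hc hvW)⟩

theorem eq_zero_of_neg_eq_self [NeZero (2 : k)] {a : k} (h : -a = a) : a = 0 :=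
  (mul_eq_zero.1 (by linear_combination -h : 2 * a = 0)).resolve_left two_ne_zero

theorem isCompl_eigenspace_neg [NeZero (2 : k)] {T : End k V} {c : k} (hc : c ≠ 0)
    (hT : T * T = algebraMap k _ (c * c)) : IsCompl (T.eigenspace c) (T.eigenspace (-c)) := by
  have hTT (v : V) : T (T v) = (c * c) • v := LinearMap.congr_fun hT v
  have h2c : 2 * c ≠ 0 := mul_ne_zero two_ne_zero hc
  refine ⟨End.disjoint_genEigenspace T (fun h => h2c (by linear_combination h)) 1 1,
    codisjoint_iff.2 (eq_top_iff.2 fun v _ => ?_)⟩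
  have hv : (2 * c)⁻¹ • (c • v + T v) + (2 * c)⁻¹ • (c • v - T v) = v := by
    rw [← smul_add, add_add_sub_cancel, ← two_smul k (c • v), smul_smul 2 c, inv_smul_smul₀ h2c]
  rw [← hv]
  refine Submodule.add_mem_sup (Submodule.smul_mem _ _ ?_) (Submodule.smul_mem _ _ ?_) <;>
  · rw [End.mem_eigenspace_iff]
    simp only [map_add, map_sub, map_smul, hTT]
    module

theorem apply_mem_eigenspace_neg {T J : End k V} (hTJ : T * J = -(J * T)) {c : k} {v : V}
    (hv : v ∈ T.eigenspace c) : J v ∈ T.eigenspace (-c) := by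
  rw [End.mem_eigenspace_iff] at hv ⊢
  rw [← End.mul_apply, hTJ, LinearMap.neg_apply, End.mul_apply, hv, map_smul, neg_smul]

theorem finrank_eigenspace_neg [FiniteDimensional k V] {T J : End k V}
    (hJ : Function.Injective J) (hTJ : T * J = -(J * T)) (c : k) :
    finrank k (T.eigenspace (-c)) = finrank k (T.eigenspace c) := by
  have le (c : k) : finrank k (T.eigenspace c) ≤ finrank k (T.eigenspace (-c)) :=
    LinearMap.finrank_le_finrank_of_injective
      (f := J.restrict fun v (hv : v ∈ T.eigenspace c) => apply_mem_eigenspace_neg hTJ hv)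
      fun v w hvw => Subtype.ext (hJ (congrArg Subtype.val hvw))
  exact ((le (-c)).trans_eq (by rw [neg_neg])).antisymm (le c)

variable {B : LinearMap.BilinForm k V} {T : End k V}

theorem apply_apply_self_eq_zero [NeZero (2 : k)] (hB : B.IsSymm)
    (hT : ∀ v w, B (T v) (T w) = B v w) (hTT : T * T = -1) (v : V) : B v (T v) = 0 := by
  have h : -B v (T v) = B v (T v) := by
    calc -B v (T v) = B ((T * T) v) (T v) := by simp [hTT]
      _ = B (T v) v := hT (T v) v
      _ = B v (T v) := hB.eq (T v) v
  exact eq_zero_of_neg_eq_self h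

theorem apply_eq_zero_of_mem_eigenspace (hT : ∀ v w, B (T v) (T w) = B v w) {c : k}
    (hc : c * c ≠ 1) {v w : V} (hv : v ∈ T.eigenspace c) (hw : w ∈ T.eigenspace c) :
    B v w = 0 := by
  have h := hT v w
  rw [End.mem_eigenspace_iff.1 hv, End.mem_eigenspace_iff.1 hw, map_smul, map_smul,
    LinearMap.smul_apply, smul_smul, smul_eq_mul] at h
  exact (mul_eq_zero.1 (by linear_combination h : (c * c - 1) * B v w = 0)).resolve_left
    (sub_ne_zero.2 hc)

theorem even_finrank_of_isAlt [NeZero (2 : k)] [FiniteDimensional k V]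
    {C : LinearMap.BilinForm k V} (halt : C.IsAlt) (hC : C.Nondegenerate) :
    Even (finrank k V) := by
  by_contra hodd
  let b := finBasis k V
  refine (LinearMap.BilinForm.nondegenerate_iff_det_ne_zero b).1 hC (eq_zero_of_neg_eq_self ?_)
  have htranspose : (LinearMap.BilinForm.toMatrix b C)ᵀ = -LinearMap.BilinForm.toMatrix b C := by
    ext i j
    simp [LinearMap.BilinForm.toMatrix_apply, halt.neg_eq]
  calc -(LinearMap.BilinForm.toMatrix b C).det = (-LinearMap.BilinForm.toMatrix b C).det := by
        rw [det_neg, Fintype.card_fin, (Nat.not_even_iff_odd.1 hodd).neg_one_pow, neg_one_mul]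
    _ = (LinearMap.BilinForm.toMatrix b C).det := by rw [← htranspose, det_transpose]

theorem even_finrank_eigenspace [NeZero (2 : k)] [FiniteDimensional k V] {J : End k V}
    (hB : B.IsSymm) (hB' : B.SeparatingLeft)
    (hT : ∀ v w, B (T v) (T w) = B v w) (hJ : ∀ v w, B (J v) (J w) = B v w)
    (hTT : T * T = -1) (hJJ : J * J = -1) (hTJ : T * J = -(J * T)) {i : k} (hi : i * i = -1) :
    Even (finrank k (T.eigenspace i)) := by
  have hi0 : i ≠ 0 := by rintro rfl; simp at hi
  have hi1 : i * i ≠ 1 := fun h => one_ne_zero (eq_zero_of_neg_eq_self (hi.symm.trans h))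
  have hcompl : IsCompl (T.eigenspace i) (T.eigenspace (-i)) :=
    isCompl_eigenspace_neg hi0 (by rw [hTT, hi, map_neg, map_one])
  let C : LinearMap.BilinForm k (T.eigenspace i) :=
    B.compl₁₂ (T.eigenspace i).subtype (J ∘ₗ (T.eigenspace i).subtype)
  have halt : C.IsAlt := fun x => apply_apply_self_eq_zero hB hJ hJJ x
  refine even_finrank_of_isAlt halt (halt.isRefl.nondegenerate_iff_separatingLeft.2 fun x hx => ?_)
  refine Subtype.ext (hB' x fun v => ?_)
  have hv : v ∈ T.eigenspace i ⊔ T.eigenspace (-i) := hcompl.sup_eq_top ▸ Submodule.mem_top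
  obtain ⟨y, hy, z, hz, rfl⟩ := Submodule.mem_sup.1 hv
  have hJz : J z ∈ T.eigenspace i := by simpa only [neg_neg] using apply_mem_eigenspace_neg hTJ hz
  have hxz : B x (J (J z)) = 0 := hx ⟨J z, hJz⟩
  rw [← End.mul_apply, hJJ, LinearMap.neg_apply, End.one_apply, map_neg, neg_eq_zero] at hxz
  rw [map_add, apply_eq_zero_of_mem_eigenspace hT hi1 x.2 hy, hxz, add_zero]

theorem four_dvd_finrank [IsAlgClosed k] [NeZero (2 : k)] [FiniteDimensional k V]
    {J : End k V} (hB : B.IsSymm) (hB' : B.SeparatingLeft)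
    (hT : ∀ v w, B (T v) (T w) = B v w) (hJ : ∀ v w, B (J v) (J w) = B v w)
    (hTT : T * T = -1) (hJJ : J * J = -1) (hTJ : T * J = -(J * T)) : 4 ∣ finrank k V := by
  obtain ⟨i, hi⟩ := IsAlgClosed.exists_eq_mul_self (-1 : k)
  have hi0 : i ≠ 0 := by rintro rfl; simp at hi
  have hJinj : Function.Injective J :=
    Function.LeftInverse.injective (g := -J) fun v => by simp [← End.mul_apply, hJJ]
  have hsum := Submodule.finrank_add_eq_of_isCompl
    (isCompl_eigenspace_neg hi0 (T := T) (by rw [hTT, ← hi, map_neg, map_one]))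
  have heq := finrank_eigenspace_neg hJinj hTJ i
  obtain ⟨m, hm⟩ := even_finrank_eigenspace hB hB' hT hJ hTT hJJ hTJ hi.symm
  omega

theorem trace_eq_trace_of_isAdjointPair [FiniteDimensional k V] (hB : B.Nondegenerate)
    {S : End k V} (h : B.IsAdjointPair B S T) :
    LinearMap.trace k V S = LinearMap.trace k V T := by
  rw [← LinearMap.trace_conj' S (B.toDual hB), ← LinearMap.trace_transpose' T]
  congr 1
  ext φ w
  obtain ⟨v, rfl⟩ := (B.toDual hB).surjective φ
  simpa [LinearMap.BilinForm.toDual_def, Module.Dual.transpose_apply] using h v w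

theorem eq_zero_of_apply_eq_zero_of_anisotropic [IsAlgClosed k] (hB : B.IsSymm)
    {S : Submodule k V} (hS : ∀ v ∈ S, B v v = 0 → v = 0) {x y : V} (hx : x ∈ S) (hy : y ∈ S)
    (hx0 : x ≠ 0) (hxy : B x y = 0) : y = 0 := by
  have hxx : B x x ≠ 0 := fun h => hx0 (hS x hx h)
  obtain ⟨c, hc⟩ := IsAlgClosed.exists_eq_mul_self (-(B y y) / B x x)
  have hsum : c • x + y = 0 := by
    refine hS _ (S.add_mem (S.smul_mem c hx) hy) ?_
    have hyx : B y x = 0 := (hB.eq y x).trans hxy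
    rw [div_eq_iff hxx] at hc
    simp only [map_add, map_smul, LinearMap.add_apply, LinearMap.smul_apply, smul_eq_mul, hxy, hyx]
    linear_combination -hc
  have hcxx : B x (c • x + y) = c * B x x := by simp [hxy]
  have hc0 : c = 0 := by simpa [hsum, hxx, eq_comm] using hcxx
  simpa [hc0] using hsum

end LinearAlgebra

section Irreducible

variable {k G V : Type*} [Field k] [AddCommGroup V] [Module k V]

section Monoid

variable [Monoid G] {ρ : Representation k G V}

theorem eq_top_of_forall_apply_mem [ρ.IsIrreducible] {x : V} (hx : x ≠ 0) {W : Submodule k V}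
    (hW : ∀ g, ρ g x ∈ W) : W = ⊤ := by
  let S : Subrepresentation ρ :=
    { toSubmodule := ⨅ g, W.comap (ρ g)
      apply_mem_toSubmodule := fun h v hv => by
        simp only [Submodule.mem_iInf, Submodule.mem_comap, ← End.mul_apply, ← map_mul] at hv ⊢
        exact fun g => hv (g * h) }
  have hxS : x ∈ S.toSubmodule := (Submodule.mem_iInf _).2 hW
  rcases eq_bot_or_eq_top S with hS | hS
  · rw [hS] at hxS
    exact absurd hxS hx
  · have hSW : S.toSubmodule ≤ W := (iInf_le _ 1).trans (by rw [map_one]; exact le_rfl)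
    rw [hS] at hSW
    exact top_le_iff.1 hSW

theorem isIrreducible_of_forall_eq_bot_or_eq_top [Nontrivial V]
    (h : ∀ W : Submodule k V, (∀ g, ∀ v ∈ W, ρ g v ∈ W) → W = ⊥ ∨ W = ⊤) : ρ.IsIrreducible :=
  { exists_pair_ne := ⟨⊥, ⊤, fun h => bot_ne_top (congrArg Subrepresentation.toSubmodule h)⟩
    eq_bot_or_eq_top := fun S => (h S.toSubmodule S.apply_mem_toSubmodule).imp
      (fun hS => Subrepresentation.toSubmodule_injective hS)
      (fun hS => Subrepresentation.toSubmodule_injective hS) }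

theorem nontrivial_of_isIrreducible (ρ : Representation k G V) [ρ.IsIrreducible] :
    Nontrivial V := by
  by_contra h
  have := not_nontrivial_iff_subsingleton.1 h
  exact bot_ne_top (α := Subrepresentation ρ)
    (Subrepresentation.toSubmodule_injective (Subsingleton.elim _ _))

theorem apply_eq_one_or_neg_one [ρ.IsIrreducible] {z : G} (hz : ∀ g, Commute z g)
    (hzz : z * z = 1) : ρ z = 1 ∨ ρ z = -1 := by
  by_contra! h
  obtain ⟨v, hv⟩ := DFunLike.ne_iff.1 h.1
  have hz_apply : ρ z (ρ z v) = v := by rw [← End.mul_apply, ← map_mul, hzz, map_one]; rfl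
  have hW : (ρ z + 1).ker = ⊤ := by
    refine eq_top_of_forall_apply_mem (ρ := ρ) (sub_ne_zero.2 hv) fun g => ?_
    rw [LinearMap.mem_ker, ← End.mul_apply, add_mul, ((hz g).map ρ).eq, one_mul]
    simp [hz_apply]
  exact h.2 (eq_neg_of_add_eq_zero_left (LinearMap.ker_eq_top.1 hW))

theorem commute_of_antiInvolution {τ : G → G} (hτ : ∀ g h, τ (g * h) = τ h * τ g) {e : End k V}
    (hee : e * e = e) (he : e ∈ Submodule.span k (ρ '' {u | τ u = u}))
    (hτe : ∀ g, e * ρ (τ g) * e = e * ρ g * e) (g h : G) :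
    Commute (e * ρ g * e) (e * ρ h * e) := by
  have key : ∀ a ∈ Submodule.span k (ρ '' {u | τ u = u}),
      e * (ρ (τ h) * a * ρ (τ g)) * e = e * (ρ g * a * ρ h) * e := by
    intro a ha
    induction ha using Submodule.span_induction with
    | mem _ hu =>
      obtain ⟨u, hu, rfl⟩ := hu
      rw [← map_mul, ← map_mul, ← map_mul, ← map_mul, ← hτe (g * u * h), hτ, hτ, hu, ← mul_assoc]
    | zero => simp
    | add a b _ _ iha ihb => simp only [mul_add, add_mul, iha, ihb]
    | smul c a _ iha => simp only [mul_smul_comm, smul_mul_assoc, iha]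
  have expand (a b : End k V) : e * a * e * (e * b * e) = e * (a * e * b) * e := by
    simp only [mul_assoc, ← mul_assoc e e, hee]
  calc e * ρ g * e * (e * ρ h * e) = e * (ρ g * e * ρ h) * e := expand _ _
    _ = e * (ρ (τ h) * e * ρ (τ g)) * e := (key e he).symm
    _ = e * ρ (τ h) * e * (e * ρ (τ g) * e) := (expand _ _).symm
    _ = e * ρ h * e * (e * ρ g * e) := by rw [hτe, hτe]

theorem finrank_range_le_one_of_commute [IsAlgClosed k] [FiniteDimensional k V]
    [ρ.IsIrreducible] {e : End k V} (hee : e * e = e)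
    (hcomm : ∀ g h, Commute (e * ρ g * e) (e * ρ h * e)) : finrank k e.range ≤ 1 := by
  cases subsingleton_or_nontrivial e.range
  · exact (finrank_zero_of_subsingleton).trans_le zero_le_one
  have mapsTo (g : G) : ∀ v ∈ e.range, (e * ρ g * e) v ∈ e.range := fun v _ => ⟨_, rfl⟩
  obtain ⟨x, hx, hTx⟩ := exists_common_eigenvector (fun g => (e * ρ g * e).restrict (mapsTo g))
    fun g h => LinearMap.ext fun v => Subtype.ext (LinearMap.congr_fun (hcomm g h) v)
  have hex : e x = x := by
    obtain ⟨y, hy⟩ := x.2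
    rw [← hy, ← End.mul_apply, hee]
  have htop : (Submodule.span k {(x : V)}).comap e = ⊤ := by
    refine eq_top_of_forall_apply_mem (ρ := ρ) (Subtype.coe_ne_coe.2 hx) fun g => ?_
    obtain ⟨c, hc⟩ := hTx g
    have hcx : e (ρ g (e x)) = c • (x : V) := congrArg Subtype.val hc
    rw [hex] at hcx
    exact Submodule.mem_span_singleton.2 ⟨c, hcx.symm⟩
  have hle : e.range ≤ Submodule.span k {(x : V)} := by
    rw [LinearMap.range_le_iff_comap, htop]
  exact (Submodule.finrank_mono hle).trans (finrank_span_le_card _)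

end Monoid

theorem finiteDimensional_of_isIrreducible [Monoid G] [Finite G] (ρ : Representation k G V)
    [ρ.IsIrreducible] : FiniteDimensional k V := by
  have := nontrivial_of_isIrreducible ρ
  obtain ⟨x, hx⟩ := exists_ne (0 : V)
  refine Module.Finite.of_fg_top ?_
  rw [← eq_top_of_forall_apply_mem (ρ := ρ) hx
    fun g => Submodule.subset_span (Set.mem_range_self g)]
  exact Submodule.fg_span (Set.finite_range _)

theorem exists_character [IsAlgClosed k] [FiniteDimensional k V] [Nontrivial V] [CommMonoid G]
    (ρ : Representation k G V) : ∃ (χ : G →* k) (v : V), v ≠ 0 ∧ ∀ g, ρ g v = χ g • v := by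
  obtain ⟨v, hv, hχ⟩ := exists_common_eigenvector ρ fun g h => (Commute.all g h).map ρ
  choose χ hχ using hχ
  have inj := smul_left_injective k hv
  refine ⟨⟨⟨χ, inj ?_⟩, fun g h => inj ?_⟩, v, hv, hχ⟩
  · simp [← hχ]
  · change χ (g * h) • v = (χ g * χ h) • v
    rw [← hχ, map_mul, End.mul_apply, hχ h, map_smul, hχ g, smul_smul, mul_comm]

end Irreducible

section CharProj

variable {k A : Type*} [Field k] [AddCommGroup A] [Fintype A]

/-- The averaging element `|A|⁻¹ ∑ x, ψ (-x) σ x` of a representation `σ` of `A` in a `k`-algebra,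
that is, the projection onto the `ψ`-isotypic part. -/
noncomputable def charProj {R : Type*} [Ring R] [Algebra k R] (σ : AddChar A R) (ψ : AddChar A k) :
    R :=
  (Fintype.card A : k)⁻¹ • ∑ x, ψ (-x) • σ x

section Algebra

variable {R : Type*} [Ring R] [Algebra k R] (σ : AddChar A R) (ψ : AddChar A k)

theorem charProj_mem_span : charProj σ ψ ∈ Submodule.span k (Set.range σ) :=
  Submodule.smul_mem _ _ (Submodule.sum_mem _ fun x _ =>
    Submodule.smul_mem _ _ (Submodule.subset_span (Set.mem_range_self x)))

theorem mul_charProj (y : A) : σ y * charProj σ ψ = ψ y • charProj σ ψ := by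
  rw [charProj, mul_smul_comm, smul_comm (ψ y), Finset.mul_sum, Finset.smul_sum (r := ψ y)]
  congr 1
  refine Fintype.sum_equiv (Equiv.addLeft y) _ _ fun x => ?_
  rw [Equiv.coe_addLeft, mul_smul_comm, smul_smul, ← AddChar.map_add_eq_mul,
    ← AddChar.map_add_eq_mul]
  rw [neg_add, add_neg_cancel_left]

theorem charProj_mul (y : A) : charProj σ ψ * σ y = ψ y • charProj σ ψ := by
  rw [← mul_charProj, charProj, mul_smul_comm, smul_mul_assoc, Finset.mul_sum, Finset.sum_mul]
  simp only [smul_mul_assoc, mul_smul_comm, ← AddChar.map_add_eq_mul, add_comm]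

theorem mul_charProj_of_semiconj (e : A ≃+ A) {T : R} (hT : ∀ x, T * σ x = σ (e x) * T) :
    T * charProj σ (ψ.compAddMonoidHom e) = charProj σ ψ * T := by
  simp only [charProj, mul_smul_comm, smul_mul_assoc, Finset.mul_sum, Finset.sum_mul, hT]
  congr 1
  exact Fintype.sum_equiv e.toEquiv _ _ fun x => by simp

variable [NeZero (Fintype.card A : k)]

theorem map_charProj {σ : AddChar A R} {ψ : AddChar A k} {M : Type*} [AddCommGroup M] [Module k M]
    (f : R →ₗ[k] M) {m : M} (hf : ∀ x, f (σ x) = ψ x • m) : f (charProj σ ψ) = m := by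
  simp only [charProj, map_smul, map_sum, hf, smul_smul, ← AddChar.map_add_eq_mul, neg_add_cancel,
    AddChar.map_zero_eq_one, one_smul, Finset.sum_const, Finset.card_univ,
    ← Nat.cast_smul_eq_nsmul k, inv_mul_cancel₀ (NeZero.ne (Fintype.card A : k))]

theorem charProj_mul_self : charProj σ ψ * charProj σ ψ = charProj σ ψ :=
  map_charProj (LinearMap.mulRight k (charProj σ ψ)) (mul_charProj σ ψ)

end Algebra

section Module

variable {V : Type*} [AddCommGroup V] [Module k V] (σ : AddChar A (End k V)) (ψ : AddChar A k)

theorem apply_charProj_apply (y : A) (v : V) : σ y (charProj σ ψ v) = ψ y • charProj σ ψ v :=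
  LinearMap.congr_fun (mul_charProj σ ψ y) v

variable [NeZero (Fintype.card A : k)]

theorem map_charProj_apply {M : Type*} [AddCommGroup M] [Module k M] {f : V →ₗ[k] M}
    (hf : ∀ x v, f (σ x v) = ψ x • f v) (v : V) : f (charProj σ ψ v) = f v :=
  map_charProj (f ∘ₗ LinearMap.applyₗ v) fun x => hf x v

variable {σ ψ}

theorem mem_range_charProj {v : V} :
    v ∈ (charProj σ ψ).range ↔ ∀ x, σ x v = ψ x • v := by
  refine ⟨?_, fun hv => ⟨v, map_charProj (R := End k V) (LinearMap.applyₗ v) hv⟩⟩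
  rintro ⟨v, rfl⟩ x
  exact apply_charProj_apply σ ψ x v

variable (σ ψ)

theorem exists_range_charProj_ne_bot [IsAlgClosed k] [FiniteDimensional k V] [Nontrivial V] :
    ∃ ψ : AddChar A k, (charProj σ ψ).range ≠ ⊥ := by
  obtain ⟨χ, v, hv0, hv⟩ := exists_character (AddChar.toMonoidHomEquiv σ)
  exact ⟨AddChar.toMonoidHomEquiv.symm χ, (Submodule.ne_bot_iff _).2
    ⟨v, mem_range_charProj.2 fun x => hv (Multiplicative.ofAdd x), hv0⟩⟩

theorem card_mul_finrank_range_charProj [FiniteDimensional k V] :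
    (Fintype.card A : k) * finrank k (charProj σ ψ).range =
      ∑ x, ψ (-x) * LinearMap.trace k V (σ x) := by
  have hproj := LinearMap.IsIdempotentElem.isProj_range (charProj σ ψ) (charProj_mul_self σ ψ)
  rw [← hproj.trace]
  simp [charProj, NeZero.ne]

end Module

theorem finrank_add_finrank_range_charProj {V : Type*} [AddCommGroup V] [Module k V]
    [FiniteDimensional k V] [CharZero k] (σ : AddChar A (End k V)) {ψ : AddChar A k} {τ : k}
    (hτ : ∀ x ≠ 0, LinearMap.trace k V (σ x) = τ) (hψ : ψ ≠ 0) :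
    finrank k V + finrank k (charProj σ ψ).range =
      finrank k (charProj σ (0 : AddChar A k)).range +
        Fintype.card A * finrank k (charProj σ ψ).range := by
  classical
  have htrace (x : A) : LinearMap.trace k V (σ x) = τ + if x = 0 then finrank k V - τ else 0 := by
    split_ifs with hx
    · rw [hx, AddChar.map_zero_eq_one, LinearMap.trace_one, add_sub_cancel]
    · rw [hτ x hx, add_zero]
  have hmult (φ : AddChar A k) : (Fintype.card A : k) * finrank k (charProj σ φ).range =
      (∑ x, φ x) * τ + (finrank k V - τ) := by
    rw [card_mul_finrank_range_charProj, ← Equiv.sum_comp (Equiv.neg A) φ]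
    simp [htrace, mul_add, Finset.sum_add_distrib, Finset.sum_mul]
  have h0 := hmult 0
  have h1 := hmult ψ
  rw [AddChar.sum_eq_zero_iff_ne_zero.2 hψ, zero_mul, zero_add] at h1
  have hcard : (Fintype.card A : k) ≠ 0 := NeZero.ne _
  simp only [AddChar.zero_apply, Finset.sum_const, Finset.card_univ, nsmul_one] at h0
  have hτ' : τ = finrank k (charProj σ (0 : AddChar A k)).range - finrank k (charProj σ ψ).range :=
    mul_left_cancel₀ hcard (by linear_combination h1 - h0)
  exact_mod_cast (by linear_combination hτ' - h1 : (finrank k V : k) +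
    finrank k (charProj σ ψ).range =
      finrank k (charProj σ (0 : AddChar A k)).range +
      Fintype.card A * finrank k (charProj σ ψ).range)

end CharProj

open scoped MatrixGroups

section SpecialLinearGroup

section CommRing

variable {R : Type*} [CommRing R]

/-- The homomorphism `x ↦ !![1, x; 0, 1]` from the additive group of `R` onto the unipotent
subgroup. -/
def unipotent : AddChar R SL(2, R) where
  toFun x := ⟨!![1, x; 0, 1], by simp⟩
  map_zero_eq_one' := Subtype.ext one_fin_two.symm
  map_add_eq_mul' x y := Subtype.ext <| by
    change !![1, x + y; 0, 1] = !![1, x; 0, 1] * !![1, y; 0, 1]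
    simp [add_comm]

/-- The homomorphism `a ↦ !![a, 0; 0, a⁻¹]` onto the diagonal torus. -/
def torus : Rˣ →* SL(2, R) where
  toFun a := ⟨!![a, 0; 0, (a⁻¹ : Rˣ)], by simp⟩
  map_one' := Subtype.ext (by simp [one_fin_two])
  map_mul' a b := Subtype.ext <| by
    change !![(↑(a * b) : R), 0; 0, ↑(a * b)⁻¹] =
      !![(a : R), 0; 0, ↑a⁻¹] * !![(b : R), 0; 0, ↑b⁻¹]
    simp [mul_comm]

/-- The representative `!![0, 1; -1, 0]` of the nontrivial Weyl group element. -/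
def weyl : SL(2, R) :=
  ⟨!![0, 1; -1, 0], by simp⟩

/-- The anti-involution exchanging the two diagonal entries, used in Gelfand's trick. -/
def diagSwap (g : SL(2, R)) : SL(2, R) :=
  ⟨!![g 1 1, g 0 1; g 1 0, g 0 0], by
    rw [det_fin_two_of, mul_comm, ← det_fin_two, g.det_coe]⟩

theorem coe_unipotent (x : R) : (unipotent x : Matrix (Fin 2) (Fin 2) R) = !![1, x; 0, 1] :=
  rfl

theorem coe_torus (a : Rˣ) : (torus a : Matrix (Fin 2) (Fin 2) R) = !![↑a, 0; 0, ↑a⁻¹] :=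
  rfl

theorem coe_weyl : ((weyl : SL(2, R)) : Matrix (Fin 2) (Fin 2) R) = !![0, 1; -1, 0] :=
  rfl

theorem torus_neg_one : torus (-1 : Rˣ) = -1 :=
  Subtype.ext (by simp [coe_torus, one_fin_two])

theorem weyl_mul_weyl : weyl * weyl = (-1 : SL(2, R)) :=
  Subtype.ext (by simp [coe_weyl, one_fin_two])

theorem torus_mul_weyl (a : Rˣ) : torus a * weyl = weyl * torus a⁻¹ :=
  Subtype.ext (by simp [coe_torus, coe_weyl])

theorem coe_diagSwap (g : SL(2, R)) :
    (diagSwap g : Matrix (Fin 2) (Fin 2) R) = !![g 1 1, g 0 1; g 1 0, g 0 0] :=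
  rfl

theorem det_fin_two_eq_one (g : SL(2, R)) : g 0 0 * g 1 1 - g 0 1 * g 1 0 = 1 :=
  (det_fin_two _).symm.trans g.det_coe

theorem mul_unipotent {g : SL(2, R)} (hg : g 1 0 = 0) (x : R) :
    g * unipotent x = unipotent (g 0 0 ^ 2 * x) * g := by
  have hdet : g 0 0 * g 1 1 = 1 := by simpa [hg] using det_fin_two_eq_one g
  ext i j
  fin_cases i <;> fin_cases j <;>
    simp [mul_apply, Fin.sum_univ_two, coe_unipotent, hg]
  linear_combination (-g 0 0 * x) * hdet

theorem torus_mul_unipotent (a : Rˣ) (x : R) :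
    torus a * unipotent x = unipotent (a ^ 2 * x) * torus a :=
  mul_unipotent rfl x

theorem diagSwap_eq_self {g : SL(2, R)} (hg : g 1 0 = 0) (hg' : g 0 0 ^ 2 = 1) :
    diagSwap g = g := by
  have hdet : g 0 0 * g 1 1 = 1 := by simpa [hg] using det_fin_two_eq_one g
  have hdiag : g 1 1 = g 0 0 := by linear_combination g 0 0 * hdet - g 1 1 * hg'
  ext i j
  fin_cases i <;> fin_cases j <;> simp [coe_diagSwap, hdiag]

theorem diagSwap_mul (g h : SL(2, R)) : diagSwap (g * h) = diagSwap h * diagSwap g := by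
  ext i j
  fin_cases i <;> fin_cases j <;>
    simp [coe_diagSwap, mul_apply, Fin.sum_univ_two, mul_comm, add_comm]

theorem diagSwap_unipotent (x : R) : diagSwap (unipotent x) = unipotent x :=
  rfl

end CommRing

section Field

variable {F : Type*} [Field F] {g : SL(2, F)}

theorem diagSwap_eq_conj_unipotent (hg : g 1 0 ≠ 0) :
    ∃ x, diagSwap g = unipotent x * g * unipotent (-x) := by
  refine ⟨(g 1 1 - g 0 0) / g 1 0, ?_⟩
  ext i j
  fin_cases i <;> fin_cases j <;>
    simp [coe_diagSwap, coe_unipotent, mul_apply, vecMul, dotProduct, Fin.sum_univ_two] <;>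
    field_simp <;> ring

theorem exists_eq_unipotent_mul_torus (hg : g 1 0 = 0) :
    ∃ (x : F) (a : Fˣ), g = unipotent x * torus a := by
  have hdet : g 0 0 * g 1 1 = 1 := by simpa [hg] using det_fin_two_eq_one g
  have hg0 : g 0 0 ≠ 0 := left_ne_zero_of_mul_eq_one hdet
  refine ⟨g 0 1 * g 0 0, Units.mk0 (g 0 0) hg0, ?_⟩
  ext i j
  fin_cases i <;> fin_cases j <;>
    simp [coe_unipotent, coe_torus, mul_apply, Fin.sum_univ_two, hg, hg0,
      eq_inv_of_mul_eq_one_right hdet]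

theorem exists_eq_unipotent_mul_weyl_mul_torus_mul_unipotent (hg : g 1 0 ≠ 0) :
    ∃ (x y : F) (a : Fˣ), g = unipotent x * weyl * torus a * unipotent y := by
  have hdet := det_fin_two_eq_one g
  refine ⟨g 0 0 / g 1 0, g 1 1 / g 1 0, Units.mk0 (-g 1 0) (neg_ne_zero.2 hg), ?_⟩
  ext i j
  fin_cases i <;> fin_cases j <;>
    simp [coe_unipotent, coe_weyl, coe_torus, mul_apply, Fin.sum_univ_two] <;> field_simp
  linear_combination -hdet

theorem exists_mul_self_eq_neg_one_anticommute_weyl (F : Type*) [Field F] [Finite F] :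
    ∃ j : SL(2, F), j * j = -1 ∧ weyl * j = -(j * weyl) := by
  obtain ⟨p, _⟩ := CharP.exists F
  have : NeZero p := ⟨CharP.char_ne_zero_of_finite F p⟩
  obtain ⟨a, b, hab⟩ := CharP.sq_add_sq F p (-1)
  push_cast at hab
  have hdet : !![(a : F), b; b, -a].det = 1 := by
    rw [det_fin_two_of]
    linear_combination -hab
  refine ⟨⟨_, hdet⟩, Subtype.ext ?_, Subtype.ext ?_⟩
  · change !![(a : F), b; b, -a] * !![(a : F), b; b, -a] = -1
    simp [one_fin_two, ← hab, sq, add_comm, mul_comm]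
  · change !![0, 1; -1, 0] * !![(a : F), b; b, -a] = -(!![(a : F), b; b, -a] * !![0, 1; -1, 0])
    simp

end Field

end SpecialLinearGroup

section InvariantForm

variable {k G V : Type*} [Field k] [Group G] [AddCommGroup V] [Module k V]
  {ρ : Representation k G V} {B : LinearMap.BilinForm k V}

theorem isAdjointPair_apply_inv (hinv : ∀ g v w, B (ρ g v) (ρ g w) = B v w) (g : G) :
    B.IsAdjointPair B (ρ g⁻¹) (ρ g) := fun v w => by
  rw [← hinv g, ← End.mul_apply, ← map_mul, mul_inv_cancel, map_one, End.one_apply]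

theorem trace_apply_inv [FiniteDimensional k V] (hB : B.Nondegenerate)
    (hinv : ∀ g v w, B (ρ g v) (ρ g w) = B v w) (g : G) :
    LinearMap.trace k V (ρ g⁻¹) = LinearMap.trace k V (ρ g) :=
  trace_eq_trace_of_isAdjointPair hB (isAdjointPair_apply_inv hinv g)

end InvariantForm

section RepresentationSL2

variable {k F V : Type*} [Field k] [Field F] [AddCommGroup V] [Module k V]

/-- The subspace of vectors fixed by the unipotent subgroup on which the torus acts through `χ`,
that is, the eigenspace of the Borel subgroup for the inflation of `χ`. -/
def borelEigenspace (ρ : Representation k SL(2, F) V) (χ : Fˣ →* k) : Submodule k V :=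
  (⨅ x, End.eigenspace (ρ (unipotent x)) 1) ⊓ ⨅ a, End.eigenspace (ρ (torus a)) (χ a)

/-- The projection onto the `ψ`-isotypic part for the unipotent subgroup. -/
noncomputable def unipotentProj [Fintype F] (ρ : Representation k SL(2, F) V) (ψ : AddChar F k) :
    End k V :=
  charProj (ρ.compAddChar unipotent) ψ

variable {ρ : Representation k SL(2, F) V} {χ : Fˣ →* k} {ψ : AddChar F k}
  {B : LinearMap.BilinForm k V}

theorem mem_borelEigenspace {v : V} : v ∈ borelEigenspace ρ χ ↔
    (∀ x, ρ (unipotent x) v = v) ∧ ∀ a, ρ (torus a) v = χ a • v := by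
  simp [borelEigenspace]

section MultiplicityOne

variable [Fintype F]

theorem unipotentProj_mul_apply_unipotent_mul (x : F) (g : SL(2, F)) :
    unipotentProj ρ ψ * ρ (unipotent x * g) * unipotentProj ρ ψ =
      ψ x • (unipotentProj ρ ψ * ρ g * unipotentProj ρ ψ) := by
  have h : unipotentProj ρ ψ * ρ (unipotent x) = ψ x • unipotentProj ρ ψ := charProj_mul _ ψ x
  rw [map_mul, ← mul_assoc, h, smul_mul_assoc, smul_mul_assoc]

theorem unipotentProj_mul_apply_mul_unipotent (x : F) (g : SL(2, F)) :
    unipotentProj ρ ψ * ρ (g * unipotent x) * unipotentProj ρ ψ =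
      ψ x • (unipotentProj ρ ψ * ρ g * unipotentProj ρ ψ) := by
  have h : ρ (unipotent x) * unipotentProj ρ ψ = ψ x • unipotentProj ρ ψ :=
    mul_charProj (ρ.compAddChar unipotent) ψ x
  rw [map_mul, mul_assoc, mul_assoc, h, mul_smul_comm, mul_smul_comm, mul_assoc]

theorem unipotentProj_mul_apply_mul_unipotentProj_eq_zero (hψ : ψ ≠ 0) {g : SL(2, F)}
    (hg : g 1 0 = 0) (hg' : g 0 0 ^ 2 ≠ 1) :
    unipotentProj ρ ψ * ρ g * unipotentProj ρ ψ = 0 := by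
  by_contra hne
  obtain ⟨x, hx⟩ := AddChar.ne_zero_iff.1 hψ
  obtain ⟨y, hy⟩ : ∃ y, g 0 0 ^ 2 * y = x + y := by
    refine ⟨x / (g 0 0 ^ 2 - 1), ?_⟩
    have := sub_ne_zero.2 hg'
    field_simp
    ring
  have h : ψ (x + y) = ψ y := smul_left_injective k hne <| by
    change ψ (x + y) • _ = ψ y • _
    rw [← unipotentProj_mul_apply_unipotent_mul (x + y), ← hy, ← mul_unipotent hg,
      unipotentProj_mul_apply_mul_unipotent]
  rw [AddChar.map_add_eq_mul, mul_eq_right₀ (ψ.val_isUnit y).ne_zero] at h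
  exact hx h

theorem unipotentProj_mul_apply_diagSwap_mul_unipotentProj (hψ : ψ ≠ 0) (g : SL(2, F)) :
    unipotentProj ρ ψ * ρ (diagSwap g) * unipotentProj ρ ψ =
      unipotentProj ρ ψ * ρ g * unipotentProj ρ ψ := by
  by_cases hg : g 1 0 = 0
  · have hdet : g 0 0 * g 1 1 = 1 := by simpa [hg] using det_fin_two_eq_one g
    by_cases hg' : g 0 0 ^ 2 = 1
    · rw [diagSwap_eq_self hg hg']
    · have hg'' : g 1 1 ^ 2 ≠ 1 := fun h => hg' <| by
        linear_combination hdet * (g 0 0 * g 1 1 + 1) - g 0 0 ^ 2 * h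
      rw [unipotentProj_mul_apply_mul_unipotentProj_eq_zero hψ hg hg',
        unipotentProj_mul_apply_mul_unipotentProj_eq_zero hψ (g := diagSwap g) hg hg'']
  · obtain ⟨x, hx⟩ := diagSwap_eq_conj_unipotent hg
    rw [hx, unipotentProj_mul_apply_mul_unipotent, unipotentProj_mul_apply_unipotent_mul, smul_smul,
      ← AddChar.map_add_eq_mul, neg_add_cancel, AddChar.map_zero_eq_one, one_smul]

variable [IsAlgClosed k] [NeZero (Fintype.card F : k)]

theorem finrank_range_unipotentProj_le_one [ρ.IsIrreducible] (hψ : ψ ≠ 0) :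
    finrank k (unipotentProj ρ ψ).range ≤ 1 := by
  have := finiteDimensional_of_isIrreducible ρ
  refine finrank_range_le_one_of_commute (charProj_mul_self _ ψ)
    (commute_of_antiInvolution diagSwap_mul (charProj_mul_self _ ψ) ?_
      (unipotentProj_mul_apply_diagSwap_mul_unipotentProj hψ))
  refine Submodule.span_mono ?_ (charProj_mem_span _ ψ)
  rintro _ ⟨x, rfl⟩
  exact ⟨unipotent x, diagSwap_unipotent x, rfl⟩

end MultiplicityOne

section Cuspidal

theorem apply_apply_self_eq_zero_of_mem_borelEigenspace [NeZero (2 : k)] (hB : B.IsSymm)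
    (hinv : ∀ g v w, B (ρ g v) (ρ g w) = B v w) (hneg : ρ (-1) = -1) {v : V}
    (hv : v ∈ borelEigenspace ρ χ) {g : SL(2, F)} (hg : g 1 0 ≠ 0) : B v (ρ g v) = 0 := by
  rw [mem_borelEigenspace] at hv
  obtain ⟨x, y, a, rfl⟩ := exists_eq_unipotent_mul_weyl_mul_torus_mul_unipotent hg
  have hweyl : B v (ρ weyl v) = 0 :=
    apply_apply_self_eq_zero hB (hinv weyl) (by rw [← map_mul, weyl_mul_weyl, hneg]) v
  calc B v (ρ (unipotent x * weyl * torus a * unipotent y) v)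
      = B (ρ (unipotent x) v) (ρ (unipotent x) (χ a • ρ weyl v)) := by
        simp only [map_mul, End.mul_apply, hv.1, hv.2, map_smul]
    _ = 0 := by rw [hinv, map_smul, hweyl, smul_zero]

theorem eq_zero_of_mem_borelEigenspace_of_apply_self_eq_zero [NeZero (2 : k)] [ρ.IsIrreducible]
    (hB : B.IsSymm) (hB' : B.SeparatingLeft) (hinv : ∀ g v w, B (ρ g v) (ρ g w) = B v w)
    (hneg : ρ (-1) = -1) {v : V} (hv : v ∈ borelEigenspace ρ χ) (hvv : B v v = 0) : v = 0 := by
  by_contra hv0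
  have htop : (B v).ker = ⊤ := by
    refine eq_top_of_forall_apply_mem (ρ := ρ) hv0 fun g => LinearMap.mem_ker.2 ?_
    by_cases hg : g 1 0 = 0
    · obtain ⟨x, a, rfl⟩ := exists_eq_unipotent_mul_torus hg
      rw [mem_borelEigenspace] at hv
      rw [map_mul, End.mul_apply, hv.2, map_smul, hv.1, map_smul, hvv, smul_zero]
    · exact apply_apply_self_eq_zero_of_mem_borelEigenspace hB hinv hneg hv hg
  exact hv0 (hB' v fun w => LinearMap.mem_ker.1 (htop ▸ Submodule.mem_top))

section Fintype

variable [Fintype F]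

theorem apply_torus_unipotentProj_zero_apply (a : Fˣ) (v : V) :
    ρ (torus a) (unipotentProj ρ 0 v) = unipotentProj ρ 0 (ρ (torus a) v) := by
  have h := mul_charProj_of_semiconj (ρ.compAddChar unipotent) (0 : AddChar F k)
    (DistribMulAction.toAddEquiv F (a ^ 2)) (T := ρ (torus a)) fun x => by
      simp [← map_mul, torus_mul_unipotent, Units.smul_def]
  exact LinearMap.congr_fun h v

theorem unipotentProj_zero_apply_weyl_mem_borelEigenspace
    (hχ : ∀ a, χ a * χ a = 1) {v : V} (hv : v ∈ borelEigenspace ρ χ) :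
    unipotentProj ρ 0 (ρ weyl v) ∈ borelEigenspace ρ χ := by
  have hχinv (a : Fˣ) : χ a⁻¹ = χ a := by
    rw [← mul_right_inj' (left_ne_zero_of_mul_eq_one (hχ a)), hχ, ← map_mul, mul_inv_cancel,
      map_one]
  refine mem_borelEigenspace.2 ⟨fun x => ?_, fun a => ?_⟩
  · simpa [unipotentProj] using
      apply_charProj_apply (ρ.compAddChar unipotent) (0 : AddChar F k) x (ρ weyl v)
  · rw [apply_torus_unipotentProj_zero_apply, ← End.mul_apply (ρ (torus a)) (ρ weyl), ← map_mul,
      torus_mul_weyl, map_mul, End.mul_apply, (mem_borelEigenspace.1 hv).2, hχinv,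
      map_smul, map_smul]

theorem card_mul_apply_unipotentProj_zero_weyl [NeZero (2 : k)] [NeZero (Fintype.card F : k)]
    (hB : B.IsSymm) (hinv : ∀ g v w, B (ρ g v) (ρ g w) = B v w) (hneg : ρ (-1) = -1) {v : V}
    (hv : v ∈ borelEigenspace ρ χ) :
    Fintype.card F * B (ρ weyl v) (unipotentProj ρ 0 (ρ weyl v)) = B v v := by
  have hterm (x : F) (hx : x ≠ 0) : B (ρ weyl v) (ρ (unipotent x) (ρ weyl v)) = 0 := by
    calc B (ρ weyl v) (ρ (unipotent x) (ρ weyl v))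
        = B (ρ weyl v) (ρ weyl (ρ (weyl⁻¹ * unipotent x * weyl) v)) := by
          simp only [← End.mul_apply, ← map_mul, mul_assoc, mul_inv_cancel_left]
      _ = B v (ρ (weyl⁻¹ * unipotent x * weyl) v) := hinv weyl _ _
      _ = 0 := by
        refine apply_apply_self_eq_zero_of_mem_borelEigenspace hB hinv hneg hv ?_
        simpa [coe_weyl, coe_unipotent, Matrix.mul_apply, SpecialLinearGroup.coe_inv] using hx
  calc (Fintype.card F : k) * B (ρ weyl v) (unipotentProj ρ 0 (ρ weyl v))
      = ∑ x, B (ρ weyl v) (ρ (unipotent x) (ρ weyl v)) := by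
        simp [unipotentProj, charProj, NeZero.ne]
    _ = B (ρ weyl v) (ρ (unipotent 0) (ρ weyl v)) := Fintype.sum_eq_single 0 hterm
    _ = B v v := by rw [AddChar.map_zero_eq_one, map_one, End.one_apply, hinv]

end Fintype

theorem borelEigenspace_eq_bot [Finite F] [IsAlgClosed k] [CharZero k] [ρ.IsIrreducible]
    (hB : B.IsSymm) (hB' : B.SeparatingLeft) (hinv : ∀ g v w, B (ρ g v) (ρ g w) = B v w)
    (hneg : ρ (-1) = -1) : borelEigenspace ρ χ = ⊥ := by
  have := Fintype.ofFinite F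
  have anisotropic (v : V) (hv : v ∈ borelEigenspace ρ χ) (hvv : B v v = 0) : v = 0 :=
    eq_zero_of_mem_borelEigenspace_of_apply_self_eq_zero hB hB' hinv hneg hv hvv
  refine (Submodule.eq_bot_iff _).2 fun v hv => ?_
  by_contra hv0
  have hvv : B v v ≠ 0 := fun h => hv0 (anisotropic v hv h)
  obtain ⟨hvU, hvT⟩ := mem_borelEigenspace.1 hv
  have hχ (a : Fˣ) : χ a * χ a = 1 := by
    by_contra h
    exact hvv (apply_eq_zero_of_mem_eigenspace (hinv (torus a)) h
      (End.mem_eigenspace_iff.2 (hvT a)) (End.mem_eigenspace_iff.2 (hvT a)))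
  have hperp : B v (unipotentProj ρ 0 (ρ weyl v)) = 0 := by
    have hfix (x : F) (w : V) : B v (ρ (unipotent x) w) = B v w := by
      rw [← hinv (unipotent x) v w, hvU]
    rw [unipotentProj, map_charProj_apply _ _ (f := B v) (by simpa using hfix)]
    exact apply_apply_self_eq_zero_of_mem_borelEigenspace hB hinv hneg hv
      (g := weyl) (by simp [coe_weyl])
  have hzero := eq_zero_of_apply_eq_zero_of_anisotropic hB anisotropic hv
    (unipotentProj_zero_apply_weyl_mem_borelEigenspace hχ hv) hv0 hperp
  have hcard := card_mul_apply_unipotentProj_zero_weyl hB hinv hneg hv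
  rw [hzero, map_zero, mul_zero] at hcard
  exact hvv hcard.symm

theorem range_unipotentProj_zero_eq_bot [Fintype F] [IsAlgClosed k] [CharZero k] [ρ.IsIrreducible]
    (hB : B.IsSymm) (hB' : B.SeparatingLeft) (hinv : ∀ g v w, B (ρ g v) (ρ g w) = B v w)
    (hneg : ρ (-1) = -1) : (unipotentProj ρ 0).range = ⊥ := by
  by_contra hbot
  have := finiteDimensional_of_isIrreducible ρ
  let S : Subrepresentation (ρ.comp torus) :=
    { toSubmodule := (unipotentProj ρ 0).range
      apply_mem_toSubmodule := by
        rintro a _ ⟨v, rfl⟩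
        exact ⟨ρ (torus a) v, (apply_torus_unipotentProj_zero_apply a v).symm⟩ }
  have : Nontrivial S.toSubmodule := Submodule.nontrivial_iff_ne_bot.2 hbot
  obtain ⟨χ, v, hv0, hv⟩ := exists_character S.toRepresentation
  have hvU : ∀ x, ρ (unipotent x) v = v := by
    simpa using mem_range_charProj.1 v.2
  have hvB : (v : V) ∈ borelEigenspace ρ χ :=
    mem_borelEigenspace.2 ⟨hvU, fun a => congrArg Subtype.val (hv a)⟩
  rw [borelEigenspace_eq_bot hB hB' hinv hneg] at hvB
  exact hv0 (Subtype.ext hvB)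

end Cuspidal

section CentralCharacter

theorem exists_finrank_range_unipotentProj_eq_one [Fintype F] [IsAlgClosed k] [CharZero k]
    [ρ.IsIrreducible] (hB : B.IsSymm) (hB' : B.SeparatingLeft)
    (hinv : ∀ g v w, B (ρ g v) (ρ g w) = B v w) (hneg : ρ (-1) = -1) :
    ∃ ψ : AddChar F k, ψ ≠ 0 ∧ finrank k (unipotentProj ρ ψ).range = 1 := by
  have := finiteDimensional_of_isIrreducible ρ
  have := nontrivial_of_isIrreducible ρ
  obtain ⟨ψ, hψ⟩ := exists_range_charProj_ne_bot (ρ.compAddChar unipotent)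
  have hψ0 : ψ ≠ 0 := by
    rintro rfl
    exact hψ (range_unipotentProj_zero_eq_bot hB hB' hinv hneg)
  exact ⟨ψ, hψ0, (finrank_range_unipotentProj_le_one hψ0).antisymm
    (Submodule.one_le_finrank_iff.2 hψ)⟩

theorem not_isSquare_neg_one [Fintype F] [NeZero (2 : k)] [NeZero (Fintype.card F : k)]
    (hB : B.IsSymm) (hB' : B.SeparatingLeft) (hinv : ∀ g v w, B (ρ g v) (ρ g w) = B v w)
    (hneg : ρ (-1) = -1) (hψ : finrank k (unipotentProj ρ ψ).range = 1) :
    ¬IsSquare (-1 : F) := by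
  rintro ⟨i, hi⟩
  obtain ⟨a, ha⟩ : ∃ a : Fˣ, a * a = -1 :=
    ⟨⟨i, -i, by rw [mul_neg, ← hi, neg_neg], by rw [neg_mul, ← hi, neg_neg]⟩, Units.ext hi.symm⟩
  have hmul (x : F) : torus a * unipotent x = unipotent (-x) * torus a := by
    rw [torus_mul_unipotent, ← Units.val_pow_eq_pow_val, sq, ha, Units.val_neg, Units.val_one,
      neg_one_mul]
  obtain ⟨⟨v, hvψ⟩, hv0, hspan⟩ := finrank_eq_one_iff'.1 hψ
  have horth : B v (ρ (torus a) v) = 0 :=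
    apply_apply_self_eq_zero hB (hinv _) (by rw [← map_mul, ← map_mul, ha, torus_neg_one, hneg]) v
  have hequiv (x : F) (w : V) :
      B v (ρ (torus a) (ρ (unipotent x) w)) = ψ x • B v (ρ (torus a) w) := by
    have hx : ρ (unipotent x) v = ψ x • v := mem_range_charProj.1 hvψ x
    rw [← End.mul_apply, ← map_mul, hmul, map_mul, End.mul_apply, ← hinv (unipotent x) v,
      ← End.mul_apply (ρ (unipotent x)), ← map_mul, ← AddChar.map_add_eq_mul, add_neg_cancel,
      AddChar.map_zero_eq_one, map_one, hx, map_smul, LinearMap.smul_apply, End.one_apply]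
  have hzero (w : V) : B v (ρ (torus a) w) = 0 := by
    obtain ⟨c, hc⟩ := hspan ⟨unipotentProj ρ ψ w, w, rfl⟩
    have hcw : c • v = unipotentProj ρ ψ w := congrArg Subtype.val hc
    calc B v (ρ (torus a) w) = B v (ρ (torus a) (unipotentProj ρ ψ w)) :=
          (map_charProj_apply (ρ.compAddChar unipotent) ψ (f := B v ∘ₗ ρ (torus a)) hequiv w).symm
      _ = 0 := by rw [← hcw, map_smul, map_smul, horth, smul_zero]
  refine hv0 (Subtype.ext (hB' v fun w => ?_))
  rw [← hzero (ρ (torus a)⁻¹ w), ← End.mul_apply, ← map_mul, mul_inv_cancel, map_one,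
    End.one_apply]

theorem trace_apply_unipotent_sq_mul (a : Fˣ) (x : F) :
    LinearMap.trace k V (ρ (unipotent (a ^ 2 * x))) = LinearMap.trace k V (ρ (unipotent x)) := by
  have h : unipotent (a ^ 2 * x) = torus a * (unipotent x * (torus a)⁻¹) := by
    rw [← mul_assoc, torus_mul_unipotent, mul_inv_cancel_right]
  rw [h, map_mul, LinearMap.trace_mul_comm, ← map_mul, inv_mul_cancel_right]

theorem trace_apply_unipotent_of_ne_zero [Finite F] [FiniteDimensional k V]
    (hB : B.Nondegenerate) (hinv : ∀ g v w, B (ρ g v) (ρ g w) = B v w)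
    (hF : ¬IsSquare (-1 : F)) {x : F} (hx : x ≠ 0) :
    LinearMap.trace k V (ρ (unipotent x)) = LinearMap.trace k V (ρ (unipotent 1)) := by
  classical
  have := Fintype.ofFinite F
  have hsquare {y : F} (hy : y ≠ 0) (hyy : IsSquare y) :
      LinearMap.trace k V (ρ (unipotent y)) = LinearMap.trace k V (ρ (unipotent 1)) := by
    obtain ⟨a, rfl⟩ := hyy
    have ha : a ≠ 0 := left_ne_zero_of_mul hy
    rw [← trace_apply_unipotent_sq_mul (Units.mk0 a ha) 1, Units.val_mk0, mul_one, sq]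
  by_cases hxx : IsSquare x
  · exact hsquare hx hxx
  · have hnegx : IsSquare (-x) := by
      rw [← quadraticChar_one_iff_isSquare (neg_ne_zero.2 hx), neg_eq_neg_one_mul, map_mul,
        quadraticChar_neg_one_iff_not_isSquare.2 hF, quadraticChar_neg_one_iff_not_isSquare.2 hxx,
        neg_one_mul, neg_neg]
    rw [← trace_apply_inv hB hinv, ← AddChar.map_neg_eq_inv, hsquare (neg_ne_zero.2 hx) hnegx]

theorem apply_neg_one_ne_neg_one [Finite F] [IsAlgClosed k] [CharZero k] [ρ.IsIrreducible]
    (hB : B.IsSymm) (hB' : B.SeparatingLeft) (hinv : ∀ g v w, B (ρ g v) (ρ g w) = B v w) :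
    ρ (-1) ≠ -1 := by
  intro hneg
  have := Fintype.ofFinite F
  have := finiteDimensional_of_isIrreducible ρ
  obtain ⟨ψ, hψ0, hψ⟩ := exists_finrank_range_unipotentProj_eq_one hB hB' hinv hneg
  have hF : ¬IsSquare (-1 : F) := not_isSquare_neg_one hB hB' hinv hneg hψ
  have hcard : Fintype.card F % 4 = 3 := by
    simpa only [FiniteField.isSquare_neg_one_iff, ne_eq, not_not] using hF
  have hdim : finrank k V + 1 = Fintype.card F := by
    have h := finrank_add_finrank_range_charProj (ρ.compAddChar unipotent)
      (fun x => trace_apply_unipotent_of_ne_zero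
        (hB.isRefl.nondegenerate_iff_separatingLeft.2 hB') hinv hF) hψ0
    change finrank k V + finrank k (unipotentProj ρ ψ).range =
      finrank k (unipotentProj ρ 0).range + _ * finrank k (unipotentProj ρ ψ).range at h
    rwa [hψ, range_unipotentProj_zero_eq_bot hB hB' hinv hneg, finrank_bot, zero_add,
      mul_one] at h
  have hfour : 4 ∣ finrank k V := by
    obtain ⟨j, hjj, hwj⟩ := exists_mul_self_eq_neg_one_anticommute_weyl F
    refine four_dvd_finrank hB hB' (hinv weyl) (hinv j) ?_ ?_ ?_
    · rw [← map_mul, weyl_mul_weyl, hneg]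
    · rw [← map_mul, hjj, hneg]
    · rw [← map_mul, hwj, ← neg_one_mul, map_mul, hneg, neg_one_mul, map_mul]
  omega

end CentralCharacter

end RepresentationSL2

end Gow

theorem gow_orthogonal_central_character_general
    {k F V : Type*} [Field k] [IsAlgClosed k] [CharZero k] [Field F] [Finite F]
    [AddCommGroup V] [Module k V] (π : Representation k (SpecialLinearGroup (Fin 2) F) V)
    [π.IsIrreducible] {B : LinearMap.BilinForm k V} (hB : B.IsSymm) (hB' : B.SeparatingLeft)
    (hinv : ∀ g v w, B (π g v) (π g w) = B v w) : π (-1) = 1 :=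
  (Gow.apply_eq_one_or_neg_one Commute.neg_one_left (by simp)).resolve_right
    (Gow.apply_neg_one_ne_neg_one hB hB' hinv)

theorem gow_orthogonal_central_character
    {F : Type*} [Field F] [Fintype F] (hq : Odd (Fintype.card F))
    {V : Type*} [AddCommGroup V] [Module ℂ V] [FiniteDimensional ℂ V] [Nontrivial V]
    (π : Representation ℂ (SpecialLinearGroup (Fin 2) F) V)
    (hirr : ∀ W : Submodule ℂ V, (∀ g, ∀ v ∈ W, π g v ∈ W) → W = ⊥ ∨ W = ⊤)
    (B : V →ₗ[ℂ] V →ₗ[ℂ] ℂ)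
    (hsymm : ∀ v w, B v w = B w v)
    (hinv : ∀ (g : SpecialLinearGroup (Fin 2) F) (v w : V), B (π g v) (π g w) = B v w)
    (hnondeg : ∀ v : V, (∀ w : V, B v w = 0) → v = 0) :
    (∀ v : V, π (-1) v = v) ∧
    LinearMap.trace ℂ V (π (-1)) = LinearMap.trace ℂ V (π 1) := by
  have : π.IsIrreducible := Gow.isIrreducible_of_forall_eq_bot_or_eq_top hirr
  have h : π (-1) = 1 := gow_orthogonal_central_character_general π ⟨hsymm⟩ hnondeg hinv
  exact ⟨fun v => by rw [h, Module.End.one_apply], by rw [h, map_one π]⟩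
end

section
/- (Gow) For q odd, if π is an irreducible complex representation of SL(2, F_q) admitting a nondegenerate invariant antisymmetric (symplectic) bilinear form, then ω_π(-I) = -1, i.e., Θ_π(-I) = -Θ_π(I). -/
open Matrix

/-!
Let `α` be conjugation by `diag(1, -1)` on `G = SL(2, F)`. Every `α(g)` is conjugate to `g⁻¹`, and
`π` is self-dual, so there is an isomorphism `R : π ≅ π ∘ α`. By Schur's lemma `π(-1) = ±1`; suppose
`π(-1) = 1`. For each `g` some `y` satisfies `y g α(y)⁻¹ = -g⁻¹`, which gives
`tr (R π(g)) = tr (R π(g⁻¹))`. As the `π(g)` span `End V`, it follows that `R` is self-adjoint for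
the symplectic form `B`, so `B'(v, w) = B(R v, w)` is again alternating, and now the adjoint of
`π(g)` is `π(τ g)`, where `τ g = α(g)⁻¹`.

The anti-involution `τ` fixes the upper unipotent subgroup `U` pointwise. As in the multiplicity-one
argument of Gelfand and Graev, if `v` spans a nontrivial character of `U`, then
`B'(v, π(g) v) = B'(v, π(τ g) v)` for all `g`: either `τ g` is a conjugate of `g` under `U`, or both
sides vanish. But `B'` is alternating, so `B'(v, π(τ g) v) = B'(π(g) v, v) = -B'(v, π(g) v)`. Hence
`B'(v, π(g) v) = 0` for all `g`, and `v = 0` because the `π(g) v` span `V`. So `U` acts trivially,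
and since the conjugates of `U` generate `G`, so does `G`; the last argument then applies to every
`v` and gives `V = 0`, a contradiction.
-/

open Representation

section Irreducible

variable {k G V : Type*} [Field k] [AddCommGroup V] [Module k V]

theorem isIrreducible_iff_forall_submodule [Monoid G] {ρ : Representation k G V} :
    ρ.IsIrreducible ↔ Nontrivial V ∧
      ∀ W : Submodule k V, (∀ g, ∀ v ∈ W, ρ g v ∈ W) → W = ⊥ ∨ W = ⊤ := by
  constructor
  · intro h
    refine ⟨?_, fun W hW ↦ ?_⟩
    · have : (⊥ : Submodule k V) ≠ ⊤ :=
        fun hbt ↦ bot_ne_top (α := Subrepresentation ρ)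
          (Subrepresentation.toSubmodule_injective hbt)
      exact (Submodule.nontrivial_iff k).1 ⟨_, _, this⟩
    · exact (eq_bot_or_eq_top (⟨W, hW⟩ : Subrepresentation ρ)).imp
        (congrArg Subrepresentation.toSubmodule) (congrArg Subrepresentation.toSubmodule)
  · rintro ⟨hV, h⟩
    have : Nontrivial (Subrepresentation ρ) :=
      ⟨⊥, ⊤, fun hbt ↦ bot_ne_top (congrArg Subrepresentation.toSubmodule hbt)⟩
    exact ⟨fun W ↦ (h W.toSubmodule W.apply_mem_toSubmodule).imp
      (fun hW ↦ Subrepresentation.toSubmodule_injective hW)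
      (fun hW ↦ Subrepresentation.toSubmodule_injective hW)⟩

theorem span_range_apply_eq_top [Monoid G] {ρ : Representation k G V} [ρ.IsIrreducible] {v : V}
    (hv : v ≠ 0) : Submodule.span k (Set.range fun g ↦ ρ g v) = ⊤ := by
  have hmem (g : G) : ρ g v ∈ Submodule.span k (Set.range fun g ↦ ρ g v) :=
    Submodule.subset_span ⟨g, rfl⟩
  refine ((isIrreducible_iff_forall_submodule.1 ‹ρ.IsIrreducible›).2 _ fun g ↦ ?_).resolve_left
    fun h ↦ hv ?_
  · change Submodule.span k _ ≤ (Submodule.span k _).comap (ρ g)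
    rw [Submodule.span_le]
    rintro _ ⟨x, rfl⟩
    simpa only [map_mul] using! hmem (g * x)
  · simpa [h] using hmem 1

theorem finiteDimensional_of_isIrreducible [Monoid G] [Finite G] (ρ : Representation k G V)
    [ρ.IsIrreducible] : FiniteDimensional k V := by
  have := (isIrreducible_iff_forall_submodule.1 ‹ρ.IsIrreducible›).1
  obtain ⟨v, hv⟩ := exists_ne (0 : V)
  exact ⟨Submodule.fg_def.2 ⟨_, Set.finite_range (fun g ↦ ρ g v), span_range_apply_eq_top hv⟩⟩

/-- **Burnside's theorem**. -/
theorem asAlgebraHom_surjective [Monoid G] [IsAlgClosed k] [FiniteDimensional k V]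
    (ρ : Representation k G V) [ρ.IsIrreducible] : Function.Surjective ρ.asAlgebraHom := by
  intro f
  have hschur := IsSimpleModule.algebraMap_end_bijective_of_isAlgClosed
    (A := MonoidAlgebra k G) (V := ρ.asModule) k
  have : Module.Finite k ρ.asModule := inferInstanceAs (Module.Finite k V)
  have : Module.Finite (Module.End (MonoidAlgebra k G) ρ.asModule) ρ.asModule :=
    Module.Finite.of_restrictScalars_finite k _ _
  -- By Schur's lemma `f` commutes with every `k[G]`-endomorphism, so double centralizer applies.
  let f' : Module.End (Module.End (MonoidAlgebra k G) ρ.asModule) ρ.asModule :=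
    { f with
      map_smul' := fun c v ↦ by
        obtain ⟨c, rfl⟩ := hschur.2 c
        exact f.map_smul c v }
  obtain ⟨r, hr⟩ :=
    Module.Finite.toModuleEnd_moduleEnd_surjective (R := MonoidAlgebra k G) (M := ρ.asModule) f'
  exact ⟨r, LinearMap.ext fun v ↦ congr($hr v)⟩

theorem eq_zero_of_forall_trace_mul_apply_eq_zero [Monoid G] [IsAlgClosed k]
    [FiniteDimensional k V] {ρ : Representation k G V} [ρ.IsIrreducible] {f : Module.End k V}
    (hf : ∀ g, LinearMap.trace k V (f * ρ g) = 0) : f = 0 := by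
  have hzero : ∀ x : MonoidAlgebra k G, LinearMap.trace k V (f * ρ.asAlgebraHom x) = 0 := by
    intro x
    induction x using MonoidAlgebra.induction_on with
    | of g => simpa using hf g
    | add x y hx hy => rw [map_add, mul_add, map_add, hx, hy, add_zero]
    | smul c x hx => rw [map_smul, mul_smul_comm, map_smul, hx, smul_zero]
  refine LinearMap.ext fun v ↦ (Module.forall_dual_apply_eq_zero_iff k (f v)).1 fun φ ↦ ?_
  obtain ⟨x, hx⟩ := asAlgebraHom_surjective ρ (φ.smulRight v)
  have hrank_one : f * φ.smulRight v = φ.smulRight (f v) := by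
    ext w; simp
  simpa [hx, hrank_one, LinearMap.trace_smulRight] using hzero x

theorem apply_eq_one_or_neg_one_of_commute [Monoid G] {ρ : Representation k G V} [ρ.IsIrreducible]
    {z : G} (hz : ∀ g, Commute z g) (hz2 : z * z = 1) : ρ z = 1 ∨ ρ z = -1 := by
  have hcomm (g : G) (v : V) : ρ z (ρ g v) = ρ g (ρ z v) := by
    simp only [← Module.End.mul_apply, ← map_mul, (hz g).eq]
  have hsq (v : V) : ρ z (ρ z v) = v := by
    rw [← Module.End.mul_apply, ← map_mul, hz2, map_one, Module.End.one_apply]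
  have hmem {v : V} : v ∈ (ρ z - 1).ker ↔ ρ z v = v := by
    rw [LinearMap.mem_ker, LinearMap.sub_apply, Module.End.one_apply, sub_eq_zero]
  have hstable : ∀ g, ∀ v ∈ (ρ z - 1).ker, ρ g v ∈ (ρ z - 1).ker := by
    intro g v hv
    rw [hmem, hcomm, hmem.1 hv]
  rcases (isIrreducible_iff_forall_submodule.1 ‹ρ.IsIrreducible›).2 _ hstable with hbot | htop
  · right
    refine LinearMap.ext fun v ↦ eq_neg_of_add_eq_zero_left ?_
    rw [Module.End.one_apply, ← Submodule.mem_bot k, ← hbot, hmem, map_add, hsq, add_comm]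
  · exact .inl (LinearMap.ext fun v ↦ hmem.1 (htop ▸ Submodule.mem_top))

end Irreducible

section InvariantForm

variable {k G V : Type*} [Field k] [AddCommGroup V] [Module k V] {B : LinearMap.BilinForm k V}

theorem trace_eq_of_isAdjointPair [FiniteDimensional k V] (hB : B.Nondegenerate)
    {f g : Module.End k V} (h : LinearMap.IsAdjointPair B B f g) :
    LinearMap.trace k V f = LinearMap.trace k V g := by
  have hconj : (B.toDual hB).conj f = Module.Dual.transpose (R := k) g := by
    refine LinearMap.ext fun φ ↦ LinearMap.ext fun y ↦ ?_
    obtain ⟨x, rfl⟩ := (B.toDual hB).surjective φ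
    simpa [LinearEquiv.conj_apply, LinearMap.BilinForm.toDual_def, Module.Dual.transpose_apply]
      using h x y
  rw [← LinearMap.trace_conj' f (B.toDual hB), hconj, LinearMap.trace_transpose']

theorem eq_zero_of_isAdjointPair_of_forall_apply_eq (h2 : (2 : k) ≠ 0) (halt : B.IsAlt)
    (hsep : B.SeparatingLeft) [Monoid G] {π : Representation k G V} [π.IsIrreducible] {τ : G → G}
    (hadj : ∀ g, LinearMap.IsAdjointPair B B (π g) (π (τ g))) {v : V}
    (hv : ∀ g, B v (π (τ g) v) = B v (π g v)) : v = 0 := by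
  by_contra hv0
  refine hv0 (hsep v fun w ↦ ?_)
  have hspan : Submodule.span k (Set.range fun g ↦ π g v) ≤ (B v).ker := by
    rw [Submodule.span_le]
    rintro _ ⟨g, rfl⟩
    have hneg : B v (π g v) = -B v (π g v) := by
      rw [halt.neg_eq, hadj, hv]
    have : 2 * B v (π g v) = 0 := by linear_combination hneg
    exact (mul_eq_zero.1 this).resolve_left h2
  rw [span_range_apply_eq_top hv0] at hspan
  exact hspan (Submodule.mem_top (x := w))

variable [Group G]

theorem isAdjointPair_apply_inv {π : Representation k G V}
    (hinv : ∀ g v w, B (π g v) (π g w) = B v w) (g : G) :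
    LinearMap.IsAdjointPair B B (π g) (π g⁻¹) := fun v w ↦ by
  simpa using hinv g v (π g⁻¹ w)

theorem character_inv_of_invariant [FiniteDimensional k V] {π : Representation k G V}
    (hB : B.Nondegenerate) (hinv : ∀ g v w, B (π g v) (π g w) = B v w) (g : G) :
    π.character g⁻¹ = π.character g :=
  (trace_eq_of_isAdjointPair hB (isAdjointPair_apply_inv hinv g)).symm

theorem exists_intertwiningMap_ne_zero_of_character_eq [IsAlgClosed k] [Finite G]
    [NeZero (Nat.card G : k)] {W : Type*} [AddCommGroup W] [Module k W] [FiniteDimensional k W]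
    {ρ : Representation k G V} {σ : Representation k G W} [ρ.IsIrreducible]
    (h : σ.character = ρ.character) : ∃ f : IntertwiningMap ρ σ, f ≠ 0 := by
  have := Fintype.ofFinite G
  have := finiteDimensional_of_isIrreducible ρ
  have : Invertible (Nat.card G : k) := invertibleOfNonzero (NeZero.ne _)
  have hrank : (Module.finrank k (IntertwiningMap ρ σ) : k) = 1 := by
    rw [← card_inv_mul_sum_char_mul_char_eq_finrank, h,
      card_inv_mul_sum_char_mul_char_eq_finrank, IsIrreducible.finrank_intertwiningMap_self,
      Nat.cast_one]
  by_contra! hzero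
  have : Subsingleton (IntertwiningMap ρ σ) := ⟨fun f g ↦ (hzero f).trans (hzero g).symm⟩
  simp [Module.finrank_zero_of_subsingleton] at hrank

theorem trace_intertwiningMap_mul_apply_inv {α : G →* G} {π : Representation k G V}
    (R : IntertwiningMap π (π.comp α)) {g y : G} (hy : π (y * g * (α y)⁻¹) = π g⁻¹) :
    LinearMap.trace k V (R.toLinearMap * π g⁻¹) = LinearMap.trace k V (R.toLinearMap * π g) := by
  have hR : R.toLinearMap * π y = π (α y) * R.toLinearMap := R.isIntertwining' y
  rw [← hy, map_mul π, map_mul π, ← mul_assoc, ← mul_assoc, hR, LinearMap.trace_mul_comm,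
    ← mul_assoc, ← mul_assoc, ← map_mul, inv_mul_cancel, map_one, one_mul]

theorem isAdjointPair_intertwiningMap_self [IsAlgClosed k] [FiniteDimensional k V] {α : G →* G}
    {π : Representation k G V} [π.IsIrreducible]
    (hα : ∀ g, ∃ y, π (y * g * (α y)⁻¹) = π g⁻¹)
    (hB : B.Nondegenerate) (hinv : ∀ g v w, B (π g v) (π g w) = B v w)
    (R : IntertwiningMap π (π.comp α)) : LinearMap.IsAdjointPair B B R R := by
  set S := B.leftAdjointOfNondegenerate hB R.toLinearMap
  have hS : LinearMap.IsAdjointPair B B S R.toLinearMap :=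
    LinearMap.BilinForm.isAdjointPairLeftAdjointOfNondegenerate B hB R.toLinearMap
  have hSR : S - R.toLinearMap = 0 := by
    refine eq_zero_of_forall_trace_mul_apply_eq_zero (ρ := π) fun g ↦ ?_
    obtain ⟨y, hy⟩ := hα g
    rw [sub_mul, map_sub, trace_eq_of_isAdjointPair hB (hS.mul (isAdjointPair_apply_inv hinv g)),
      LinearMap.trace_mul_comm, trace_intertwiningMap_mul_apply_inv R hy, sub_self]
  rwa [sub_eq_zero.1 hSR] at hS

theorem exists_isAlt_isAdjointPair_twist [IsAlgClosed k] [Finite G] [NeZero (Nat.card G : k)]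
    (h2 : (2 : k) ≠ 0) {α : G →* G} (hαconj : ∀ g, IsConj (α g) g⁻¹)
    {π : Representation k G V} [π.IsIrreducible] (hα : ∀ g, ∃ y, π (y * g * (α y)⁻¹) = π g⁻¹)
    (halt : B.IsAlt) (hB : B.Nondegenerate) (hinv : ∀ g v w, B (π g v) (π g w) = B v w) :
    ∃ B' : LinearMap.BilinForm k V, B'.IsAlt ∧ B'.SeparatingLeft ∧
      ∀ g, LinearMap.IsAdjointPair B' B' (π g) (π (α g)⁻¹) := by
  have := finiteDimensional_of_isIrreducible π
  have hchar : character (π.comp α) = π.character := funext fun g ↦ by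
    obtain ⟨y, hy⟩ := isConj_iff.1 (hαconj g)
    rw [← character_inv_of_invariant hB hinv g, ← hy, char_conj]
    rfl
  obtain ⟨R, hR0⟩ := exists_intertwiningMap_ne_zero_of_character_eq (ρ := π) hchar
  have hRinj := (IsIrreducible.injective_or_eq_zero R).resolve_right hR0
  have hself := isAdjointPair_intertwiningMap_self hα hB hinv R
  have hR (g : G) (v : V) : R (π g v) = π (α g) (R v) :=
    IntertwiningMap.isIntertwining _ _ R g v
  refine ⟨B ∘ₗ R.toLinearMap, fun v ↦ ?_, fun v hv ↦ ?_, fun g v w ↦ ?_⟩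
  · have hneg : B (R v) v = -B (R v) v := (hself v v).trans (halt.neg_eq (R v) v).symm
    have : 2 * B (R v) v = 0 := by linear_combination hneg
    exact (mul_eq_zero.1 this).resolve_left h2
  · exact hRinj ((hB.1 _ hv).trans (map_zero R).symm)
  · change B (R (π g v)) w = B (R v) (π (α g)⁻¹ w)
    rw [hR, isAdjointPair_apply_inv hinv]

end InvariantForm

theorem iSup_iInf_eigenspace_eq_top_of_pow_eq_one {ι k V : Type*} [Field k] [IsAlgClosed k]
    [AddCommGroup V] [Module k V] [FiniteDimensional k V] {f : ι → Module.End k V}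
    (hcomm : ∀ i j, Commute (f i) (f j)) {n : ℕ} (hn : (n : k) ≠ 0) (hf : ∀ i, f i ^ n = 1) :
    ⨆ χ : ι → k, ⨅ i, (f i).eigenspace (χ i) = ⊤ := by
  have hsemi (i : ι) : (f i).IsFinitelySemisimple :=
    (Module.End.isSemisimple_of_squarefree_aeval_eq_zero
      (Polynomial.X_pow_sub_one_separable_iff.2 hn).squarefree (by simp [hf])).isFinitelySemisimple
  simp only [← (hsemi _).maxGenEigenspace_eq_eigenspace]
  exact Module.End.iSup_iInf_maxGenEigenspace_eq_top_of_iSup_maxGenEigenspace_eq_top_of_commute f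
    (fun i j _ ↦ hcomm i j) fun i ↦ (f i).iSup_maxGenEigenspace_eq_top

section SL2

open Matrix.SpecialLinearGroup
open scoped MatrixGroups

/-- The matrix `m` with its diagonal entries exchanged. For `m` in `SL(2, R)` this is the inverse of
the conjugate of `m` by `diag(1, -1)`. Defined on all matrices so that it also applies to matrices
of determinant `-1`. -/
def diagSwap {R : Type*} (m : Matrix (Fin 2) (Fin 2) R) : Matrix (Fin 2) (Fin 2) R :=
  !![m 1 1, m 0 1; m 1 0, m 0 0]

/-- The representative `!![0, 1; -1, 0]` of the nontrivial Weyl group element of `SL(2, R)`. -/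
def weylElement (R : Type*) [CommRing R] : SL(2, R) :=
  ⟨!![0, 1; -1, 0], by simp⟩

theorem weylElement_sq (R : Type*) [CommRing R] : weylElement R ^ 2 = -1 := by
  ext i j
  rw [pow_two, coe_mul]
  fin_cases i <;> fin_cases j <;> simp [weylElement]

/-- Conjugation of `SL(2, R)` by `diag(1, -1)`, written out entrywise. -/
def diagConj (R : Type*) [CommRing R] : SL(2, R) →* SL(2, R) where
  toFun g := ⟨!![g 0 0, -g 0 1; -g 1 0, g 1 1], by
    rw [det_fin_two_of, neg_mul_neg, ← det_fin_two, g.det_coe]⟩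
  map_one' := by ext i j; fin_cases i <;> fin_cases j <;> simp
  map_mul' g h := by
    refine Subtype.ext (?_ : _ =
      !![g 0 0, -g 0 1; -g 1 0, g 1 1] * !![h 0 0, -h 0 1; -h 1 0, h 1 1])
    ext i j
    fin_cases i <;> fin_cases j <;> simp [mul_apply, Fin.sum_univ_two] <;> ring

theorem coe_diagConj {R : Type*} [CommRing R] (g : SL(2, R)) :
    (diagConj R g : Matrix (Fin 2) (Fin 2) R) = !![g 0 0, -g 0 1; -g 1 0, g 1 1] := rfl

theorem coe_diagConj_inv {R : Type*} [CommRing R] (g : SL(2, R)) :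
    ((diagConj R g)⁻¹ : SL(2, R)) = diagSwap (g : Matrix (Fin 2) (Fin 2) R) := by
  simp [coe_diagConj, diagSwap, coe_inv, adjugate_fin_two_of]

/-- The unipotent matrix with rows `(1, x)` and `(0, 1)`. -/
abbrev upperUnipotent {R : Type*} [CommRing R] (x : R) : SL(2, R) :=
  transvection (zero_ne_one : (0 : Fin 2) ≠ 1) x

theorem coe_upperUnipotent {R : Type*} [CommRing R] (x : R) :
    (upperUnipotent x : Matrix (Fin 2) (Fin 2) R) = !![1, x; 0, 1] := by
  ext i j
  fin_cases i <;> fin_cases j <;> simp [transvection_coe]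

theorem upperUnipotent_inv {R : Type*} [CommRing R] (x : R) :
    (upperUnipotent x)⁻¹ = upperUnipotent (-x) :=
  transvection_inv _ x

theorem diagConj_upperUnipotent_inv {R : Type*} [CommRing R] (x : R) :
    (diagConj R (upperUnipotent x))⁻¹ = upperUnipotent x := by
  ext1
  rw [coe_diagConj_inv, coe_upperUnipotent]
  simp [diagSwap]

variable {F : Type*} [Field F]

theorem upperUnipotent_mul_eq_diagSwap_mul {m : Matrix (Fin 2) (Fin 2) F} (hm : m 1 0 ≠ 0) :
    (upperUnipotent ((m 1 1 - m 0 0) / m 1 0) : Matrix (Fin 2) (Fin 2) F) * m =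
      diagSwap m * (upperUnipotent ((m 1 1 - m 0 0) / m 1 0) : Matrix (Fin 2) (Fin 2) F) := by
  rw [coe_upperUnipotent]
  ext i j
  fin_cases i <;> fin_cases j <;> simp [diagSwap, mul_apply, Fin.sum_univ_two] <;> field_simp <;>
    ring

theorem exists_mul_eq_diagSwap_mul (m : Matrix (Fin 2) (Fin 2) F) :
    ∃ y : SL(2, F), (y : Matrix (Fin 2) (Fin 2) F) * m = diagSwap m * y := by
  by_cases hc : m 1 0 = 0
  · by_cases hb : m 0 1 = 0
    · refine ⟨weylElement F, ?_⟩
      ext i j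
      fin_cases i <;> fin_cases j <;>
        simp [weylElement, diagSwap, mul_apply, Fin.sum_univ_two, hb, hc]
    · refine ⟨⟨!![1, 0; (m 0 0 - m 1 1) / m 0 1, 1], by simp⟩, ?_⟩
      ext i j
      fin_cases i <;> fin_cases j <;> simp [diagSwap, mul_apply, Fin.sum_univ_two] <;>
        field_simp <;> ring
  · exact ⟨_, upperUnipotent_mul_eq_diagSwap_mul hc⟩

theorem diagConj_isConj_inv (g : SL(2, F)) : IsConj (diagConj F g) g⁻¹ := by
  obtain ⟨y, hy⟩ := exists_mul_eq_diagSwap_mul (g : Matrix (Fin 2) (Fin 2) F)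
  rw [← coe_diagConj_inv, ← coe_mul, ← coe_mul] at hy
  have hconj : y * g * y⁻¹ = (diagConj F g)⁻¹ := mul_inv_eq_iff_eq_mul.2 (Subtype.ext hy)
  refine (isConj_iff.2 ⟨y, ?_⟩ : IsConj g⁻¹ (diagConj F g)).symm
  rw [← _root_.inv_inj, ← hconj]
  group

theorem exists_mul_mul_diagConj_inv_eq_neg_inv (g : SL(2, F)) :
    ∃ y, y * g * (diagConj F y)⁻¹ = -g⁻¹ := by
  let D : Matrix (Fin 2) (Fin 2) F := !![1, 0; 0, -1]
  have hD : D * D = 1 := by simp [D, one_fin_two]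
  have hswap : diagSwap ((g : Matrix (Fin 2) (Fin 2) F) * D) = -g⁻¹ * D := by
    ext i j
    fin_cases i <;> fin_cases j <;>
      simp [D, diagSwap, mul_apply, Fin.sum_univ_two, coe_inv, adjugate_fin_two]
  obtain ⟨y, hy⟩ := exists_mul_eq_diagSwap_mul ((g : Matrix (Fin 2) (Fin 2) F) * D)
  have hDy : D * y * D = diagConj F y := by
    ext i j
    rw [coe_diagConj]
    fin_cases i <;> fin_cases j <;> simp [D, mul_apply, vecMul, dotProduct, Fin.sum_univ_two]
  refine ⟨y, mul_inv_eq_iff_eq_mul.2 (Subtype.ext ?_)⟩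
  calc ((y * g : SL(2, F)) : Matrix (Fin 2) (Fin 2) F)
      = y * (g * D) * D := by rw [coe_mul, mul_assoc, mul_assoc, hD, mul_one]
    _ = -g⁻¹ * (D * y * D) := by rw [hy, hswap]; simp only [mul_assoc]
    _ = (-g⁻¹ * diagConj F y : SL(2, F)) := by rw [hDy, coe_mul, coe_neg]

theorem eq_top_of_forall_upperUnipotent_mem {N : Subgroup SL(2, F)} [hN : N.Normal]
    (h : ∀ x, upperUnipotent x ∈ N) : N = ⊤ := by
  refine eq_top_iff.2 fun g _ ↦ SL2.transvection_induction (· ∈ N) (fun i j hij x ↦ ?_)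
    (fun _ _ ↦ N.mul_mem) g
  fin_cases i <;> fin_cases j
  · exact absurd rfl hij
  · exact h x
  · have hlower : transvection hij x = weylElement F * upperUnipotent (-x) * (weylElement F)⁻¹ := by
      rw [eq_mul_inv_iff_mul_eq]
      ext i j
      rw [coe_mul, coe_mul, coe_upperUnipotent]
      fin_cases i <;> fin_cases j <;>
        simp [weylElement, mul_apply, Fin.sum_univ_two, transvection_coe]
    exact hlower ▸ hN.conj_mem _ (h (-x)) _
  · exact absurd rfl hij

theorem two_ne_zero_of_card_SL2_ne_zero {k : Type*} [Semiring k]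
    [NeZero (Nat.card SL(2, F) : k)] : (2 : k) ≠ 0 := by
  have hw4 : weylElement F ^ 4 = 1 := by
    rw [pow_mul (weylElement F) 2 2, weylElement_sq, neg_one_sq]
  have hw1 : weylElement F ≠ 1 := fun h ↦ by
    simpa [weylElement] using congr(($h : Matrix (Fin 2) (Fin 2) F) 0 1)
  have heven : 2 ∣ Nat.card SL(2, F) := by
    by_contra hodd
    have hcop : Nat.Coprime (2 ^ 2) (Nat.card SL(2, F)) :=
      ((Nat.Prime.coprime_iff_not_dvd Nat.prime_two).2 hodd).pow_left 2
    have : orderOf (weylElement F) ∣ 1 :=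
      hcop ▸ Nat.dvd_gcd (orderOf_dvd_of_pow_eq_one hw4) (orderOf_dvd_natCard _)
    exact hw1 (orderOf_eq_one_iff.1 (Nat.dvd_one.1 this))
  obtain ⟨m, hm⟩ := heven
  intro h2
  apply NeZero.ne (Nat.card SL(2, F) : k)
  rw [hm, Nat.cast_mul, Nat.cast_two, h2, zero_mul]

section Eigenvector

variable {k V : Type*} [Field k] [AddCommGroup V] [Module k V] {B : LinearMap.BilinForm k V}
  {π : Representation k SL(2, F) V} {χ : F → k} {v : V}

theorem apply_apply_conj_upperUnipotent
    (hadj : ∀ x, LinearMap.IsAdjointPair B B (π (upperUnipotent x)) (π (upperUnipotent x)))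
    (hv : ∀ x, π (upperUnipotent x) v = χ x • v) (g : SL(2, F)) (x : F) :
    B v (π (upperUnipotent x * g * (upperUnipotent x)⁻¹) v) = B v (π g v) := by
  have hχ : (χ (-x) * χ x) • v = v := by
    rw [mul_smul, ← hv, ← map_smul, ← hv (-x), ← Module.End.mul_apply, ← map_mul,
      ← upperUnipotent_inv, mul_inv_cancel, map_one, Module.End.one_apply]
  calc B v (π (upperUnipotent x * g * (upperUnipotent x)⁻¹) v)
      = B (π (upperUnipotent x) v) (π g (π (upperUnipotent (-x)) v)) := by
        rw [map_mul, map_mul, upperUnipotent_inv, Module.End.mul_apply, Module.End.mul_apply, hadj]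
    _ = B ((χ (-x) * χ x) • v) (π g v) := by simp [hv, mul_assoc, mul_left_comm]
    _ = B v (π g v) := by rw [hχ]

theorem apply_apply_eq_zero_of_upper_triangular
    (hadj : ∀ x, LinearMap.IsAdjointPair B B (π (upperUnipotent x)) (π (upperUnipotent x)))
    (hv : ∀ x, π (upperUnipotent x) v = χ x • v) {x₀ : F} (hx₀ : χ x₀ ≠ 1)
    {g : SL(2, F)} (hg : g 1 0 = 0) (hdiag : g 0 0 ≠ g 1 1) : B v (π g v) = 0 := by
  have hsub : g 1 1 - g 0 0 ≠ 0 := sub_ne_zero.2 hdiag.symm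
  obtain ⟨x, hx⟩ : ∃ x, x * (g 1 1 - g 0 0) = g 1 1 * x₀ := ⟨_, div_mul_cancel₀ _ hsub⟩
  have hconj : upperUnipotent x * g * (upperUnipotent x)⁻¹ = upperUnipotent x₀ * g := by
    rw [mul_inv_eq_iff_eq_mul]
    ext i j
    rw [coe_mul, coe_mul, coe_mul, coe_upperUnipotent, coe_upperUnipotent]
    fin_cases i <;> fin_cases j <;> simp [mul_apply, vecMul, dotProduct, Fin.sum_univ_two, hg]
    linear_combination hx
  have hscale : χ x₀ * B v (π g v) = B v (π g v) := calc
    χ x₀ * B v (π g v) = B (π (upperUnipotent x₀) v) (π g v) := by simp [hv]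
    _ = B v (π (upperUnipotent x₀ * g) v) := by rw [hadj, map_mul, Module.End.mul_apply]
    _ = B v (π g v) := by rw [← hconj, apply_apply_conj_upperUnipotent hadj hv]
  exact (mul_left_eq_self₀.1 hscale).resolve_left hx₀

theorem apply_apply_diagConj_inv
    (hadj : ∀ x, LinearMap.IsAdjointPair B B (π (upperUnipotent x)) (π (upperUnipotent x)))
    (hv : ∀ x, π (upperUnipotent x) v = χ x • v) {x₀ : F} (hx₀ : χ x₀ ≠ 1) (g : SL(2, F)) :
    B v (π (diagConj F g)⁻¹ v) = B v (π g v) := by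
  by_cases hg : g 1 0 = 0
  · have hτ : ((diagConj F g)⁻¹ : SL(2, F)) 1 0 = 0 := by
      rw [coe_diagConj_inv]
      simpa [diagSwap] using hg
    by_cases hdiag : g 0 0 = g 1 1
    · have : (diagConj F g)⁻¹ = g := by
        ext i j
        rw [coe_diagConj_inv]
        fin_cases i <;> fin_cases j <;> simp [diagSwap, hdiag]
      rw [this]
    · rw [apply_apply_eq_zero_of_upper_triangular hadj hv hx₀ hg hdiag,
        apply_apply_eq_zero_of_upper_triangular hadj hv hx₀ hτ]
      rw [coe_diagConj_inv]
      simpa [diagSwap] using Ne.symm hdiag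
  · have hconj : upperUnipotent ((g 1 1 - g 0 0) / g 1 0) * g *
        (upperUnipotent ((g 1 1 - g 0 0) / g 1 0))⁻¹ = (diagConj F g)⁻¹ :=
      mul_inv_eq_iff_eq_mul.2 <| Subtype.ext <| by
        rw [coe_mul, coe_mul, coe_diagConj_inv]
        exact upperUnipotent_mul_eq_diagSwap_mul hg
    rw [← hconj, apply_apply_conj_upperUnipotent hadj hv]

end Eigenvector

section TwistedForm

variable {k V : Type*} [Field k] [AddCommGroup V] [Module k V] {B : LinearMap.BilinForm k V}
  {π : Representation k SL(2, F) V} [π.IsIrreducible]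

theorem apply_upperUnipotent_eq_self_of_eigenvector (h2 : (2 : k) ≠ 0) (halt : B.IsAlt)
    (hsep : B.SeparatingLeft)
    (hadj : ∀ g, LinearMap.IsAdjointPair B B (π g) (π (diagConj F g)⁻¹)) {χ : F → k} {v : V}
    (hv : ∀ x, π (upperUnipotent x) v = χ x • v) (x : F) : π (upperUnipotent x) v = v := by
  by_cases hx : χ x = 1
  · rw [hv, hx, one_smul]
  · have hU (y : F) :
        LinearMap.IsAdjointPair B B (π (upperUnipotent y)) (π (upperUnipotent y)) := by
      simpa only [diagConj_upperUnipotent_inv] using hadj (upperUnipotent y)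
    rw [eq_zero_of_isAdjointPair_of_forall_apply_eq h2 halt hsep hadj
      (apply_apply_diagConj_inv hU hv hx), map_zero]

theorem upperUnipotent_mem_ker [IsAlgClosed k] [Finite F] [NeZero (Nat.card SL(2, F) : k)]
    (halt : B.IsAlt) (hsep : B.SeparatingLeft)
    (hadj : ∀ g, LinearMap.IsAdjointPair B B (π g) (π (diagConj F g)⁻¹)) (x : F) :
    upperUnipotent x ∈ π.ker := by
  have := finiteDimensional_of_isIrreducible π
  have hcomm (y z : F) : Commute (π (upperUnipotent y)) (π (upperUnipotent z)) := by
    rw [commute_iff_eq, ← map_mul, ← map_mul, ← transvection_add, ← transvection_add, add_comm]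
  have hspan := iSup_iInf_eigenspace_eq_top_of_pow_eq_one hcomm (NeZero.ne (Nat.card SL(2, F) : k))
    fun y ↦ by rw [← map_pow, pow_card_eq_one', map_one]
  have hle : ⨆ χ : F → k, ⨅ y, Module.End.eigenspace (π (upperUnipotent y)) (χ y) ≤
      Module.End.eigenspace (π (upperUnipotent x)) 1 := by
    refine iSup_le fun χ v hv ↦ ?_
    simp only [Submodule.mem_iInf, Module.End.mem_eigenspace_iff] at hv
    rw [Module.End.mem_eigenspace_iff, one_smul]
    exact apply_upperUnipotent_eq_self_of_eigenvector
      (two_ne_zero_of_card_SL2_ne_zero (F := F)) halt hsep hadj hv x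
  rw [hspan] at hle
  refine MonoidHom.mem_ker.2 (LinearMap.ext fun v ↦ ?_)
  simpa only [Module.End.mem_eigenspace_iff, one_smul] using! hle (Submodule.mem_top (x := v))

end TwistedForm

theorem apply_neg_one_ne_one {k V : Type*} [Field k] [IsAlgClosed k] [AddCommGroup V] [Module k V]
    [Finite F] [NeZero (Nat.card SL(2, F) : k)] {π : Representation k SL(2, F) V}
    [π.IsIrreducible] {B : LinearMap.BilinForm k V} (halt : B.IsAlt) (hB : B.Nondegenerate)
    (hinv : ∀ g v w, B (π g v) (π g w) = B v w) : π (-1) ≠ 1 := by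
  intro hneg
  have h2 : (2 : k) ≠ 0 := two_ne_zero_of_card_SL2_ne_zero (F := F)
  have htwist (g : SL(2, F)) : ∃ y, π (y * g * (diagConj F y)⁻¹) = π g⁻¹ := by
    obtain ⟨y, hy⟩ := exists_mul_mul_diagConj_inv_eq_neg_inv g
    exact ⟨y, by rw [hy, ← neg_one_mul, map_mul, hneg, one_mul]⟩
  obtain ⟨B', halt', hsep', hadj'⟩ :=
    exists_isAlt_isAdjointPair_twist h2 diagConj_isConj_inv htwist halt hB hinv
  have hker : π.ker = ⊤ := eq_top_of_forall_upperUnipotent_mem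
    (upperUnipotent_mem_ker halt' hsep' hadj')
  have htriv (g : SL(2, F)) : π g = 1 := MonoidHom.mem_ker.1 (hker ▸ Subgroup.mem_top g)
  have := (isIrreducible_iff_forall_submodule.1 ‹π.IsIrreducible›).1
  obtain ⟨v, hv⟩ := exists_ne (0 : V)
  exact hv <| eq_zero_of_isAdjointPair_of_forall_apply_eq h2 halt' hsep' hadj' fun g ↦ by
    rw [htriv, htriv]

end SL2

theorem gow_symplectic_central_character_general {k F V : Type*} [Field k] [IsAlgClosed k]
    [Field F] [Finite F] [NeZero (Nat.card (SpecialLinearGroup (Fin 2) F) : k)]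
    [AddCommGroup V] [Module k V] (π : Representation k (SpecialLinearGroup (Fin 2) F) V)
    [π.IsIrreducible] {B : LinearMap.BilinForm k V} (halt : B.IsAlt)
    (hinv : ∀ g v w, B (π g v) (π g w) = B v w) (hB : B.Nondegenerate) :
    (∀ v, π (-1) v = -v) ∧ π.character (-1) = -π.character 1 := by
  have hneg : π (-1) = -1 :=
    (apply_eq_one_or_neg_one_of_commute Commute.neg_one_left (by simp)).resolve_left
      (apply_neg_one_ne_one halt hB hinv)
  exact ⟨fun v ↦ congr($hneg v), by rw [character, character, hneg, map_neg, map_one π]⟩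

theorem gow_symplectic_central_character
    {F : Type*} [Field F] [Fintype F] (hq : Odd (Fintype.card F))
    {V : Type*} [AddCommGroup V] [Module ℂ V] [FiniteDimensional ℂ V] [Nontrivial V]
    (π : Representation ℂ (SpecialLinearGroup (Fin 2) F) V)
    (hirr : ∀ W : Submodule ℂ V, (∀ g, ∀ v ∈ W, π g v ∈ W) → W = ⊥ ∨ W = ⊤)
    (B : V →ₗ[ℂ] V →ₗ[ℂ] ℂ)
    (halt : ∀ v : V, B v v = 0)
    (hinv : ∀ (g : SpecialLinearGroup (Fin 2) F) (v w : V), B (π g v) (π g w) = B v w)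
    (hnondeg : ∀ v : V, (∀ w : V, B v w = 0) → v = 0) :
    (∀ v : V, π (-1) v = -v) ∧
    LinearMap.trace ℂ V (π (-1)) = -LinearMap.trace ℂ V (π 1) := by
  have : π.IsIrreducible := isIrreducible_iff_forall_submodule.2 ⟨inferInstance, hirr⟩
  exact gow_symplectic_central_character_general π halt hinv
    ((LinearMap.IsAlt.isRefl halt).nondegenerate_iff_separatingLeft.2 hnondeg)
end
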